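/- Let A be a σ-unital C*-algebra, τ a densely defined lower semicontinuous tracial weight on A extended to a normal tracial weight on the bidual A**, and let Tₙ, T ∈ M(A)₊ with ‖T‖ ≤ 1, Tₙ ≤ T_{n+1} for all n, and Tₙ → T strictly. Then for every δ ≥ 0, d_τ((Tₙ − δ)₊) increases to d_τ((T − δ)₊). -/

import Mathlib

open Filter Topology ENNReal
open scoped MultiplierAlgebra

def StrictTendsto {A : Type*} [NonUnitalCStarAlgebra A]
    (T : ℕ → 𝓜(ℂ, A)) (L : 𝓜(ℂ, A)) : Prop :=
  ∀ a : A,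
    Tendsto (fun n => ‖(T n - L) * (a : 𝓜(ℂ, A))‖) atTop (𝓝 0) ∧
    Tendsto (fun n => ‖(a : 𝓜(ℂ, A)) * (T n - L)‖) atTop (𝓝 0)

/-- `A` is σ-unital: it admits a countable (sequential) approximate identity. -/
def SigmaUnital (A : Type*) [NonUnitalCStarAlgebra A] : Prop :=
  ∃ e : ℕ → A, ∀ a : A,
    Tendsto (fun n => ‖a - a * e n‖) atTop (𝓝 0) ∧
    Tendsto (fun n => ‖a - e n * a‖) atTop (𝓝 0)

/-- A tracial weight on the positive cone (here on the multiplier algebra,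
modelling the canonical extension of a densely defined lower semicontinuous
tracial weight on `A` to a normal trace on `A**`, restricted to `M(A)`). -/
def IsTracialWeight {M : Type*} [CStarAlgebra M] [PartialOrder M] [StarOrderedRing M] (τ : M → ℝ≥0∞) : Prop :=
  (∀ x y : M, 0 ≤ x → 0 ≤ y → τ (x + y) = τ x + τ y) ∧
  (∀ (c : ℝ) (x : M), 0 ≤ c → 0 ≤ x → τ (c • x) = ENNReal.ofReal c * τ x) ∧
  (∀ x : M, τ (x * star x) = τ (star x * x)) ∧
  (∀ (x : M) (u : ℕ → M), 0 ≤ x → (∀ n, 0 ≤ u n) →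
    Tendsto (fun n => ‖u n - x‖) atTop (𝓝 0) →
    τ x ≤ Filter.liminf (fun n => τ (u n)) atTop)

noncomputable def dimFn {M : Type*} [CStarAlgebra M] (τ : M → ℝ≥0∞) (x : M) : ℝ≥0∞ :=
  ⨆ n : ℕ, τ (cfc (fun t : ℝ => t ^ ((1 : ℝ) / (n + 1))) x)

noncomputable def cutoff {M : Type*} [CStarAlgebra M] (a : M) (δ : ℝ) : M :=
  cfc (fun t : ℝ => max (t - δ) 0) a

/-!
If `a ≤ b` and `ε > 0`, then `(a - δ - ε)₊ ≤ c (b - δ)₊ c*` for a contraction `c = h(a)`. A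
trace satisfies `τ (f (y y*)) = τ (f (y* y))`, so compression by `c` does not increase `τ (x ^ s)`
for `0 < s ≤ 1`, where `t ↦ t ^ s` is operator monotone. Letting `ε → 0`, lower semicontinuity gives
`τ ((a - δ)₊ ^ s) ≤ τ ((b - δ)₊ ^ s)` for each exponent separately.

For the limit, let `cₖ ∈ A` be self-adjoint with `cₖ²` increasing strictly to `1`. Normality along
`√x cₖ² √x ↑ x` gives `τ x = sup τ (cₖ x cₖ)`, while `xₙ → x` strictly forces `cₖ xₙ cₖ → cₖ x cₖ`
in norm; hence `τ` is lower semicontinuous along strictly convergent sequences. Functional calculus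
by a continuous function preserves strict convergence, so this applies to `(Tₙ - δ)₊ ^ s`. Finally
`dimFn` is the supremum over the exponents `s = 1 / (n + 1)`, and suprema commute.
-/

section CStarAlgebra

lemma exists_polynomial_tendstoUniformlyOn_cfc (M : Type*) [CStarAlgebra M] {f : ℝ → ℝ}
    (hf : Continuous f) (C : ℝ) :
    ∃ p : ℕ → Polynomial ℝ, TendstoUniformlyOn (fun k (a : M) => Polynomial.aeval a (p k))
      (fun a => cfc f a) atTop {a | IsSelfAdjoint a ∧ ‖a‖ ≤ C} := by
  choose p hp using fun k : ℕ =>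
    exists_polynomial_near_of_continuousOn (-C) C f hf.continuousOn _ k.one_div_pos_of_nat
  refine ⟨p, Metric.tendstoUniformlyOn_iff.2 fun ε hε => ?_⟩
  filter_upwards [tendsto_one_div_add_atTop_nhds_zero_nat.eventually_lt_const hε]
    with k hk a ⟨ha, haC⟩
  rw [dist_eq_norm, ← cfc_polynomial (p k) a, ← cfc_sub f (p k).eval a]
  refine (norm_cfc_le Nat.one_div_pos_of_nat.le fun t ht => ?_).trans_lt hk
  have htC : t ∈ Set.Icc (-C) C := abs_le.1 <|
    (IsometricContinuousFunctionalCalculus.norm_spectrum_le a ht ha).trans haC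
  rw [norm_sub_rev]
  exact (hp k t htC).le

lemma semiconjBy_aeval {R B : Type*} [CommSemiring R] [Semiring B] [Algebra R B] {y a b : B}
    (h : SemiconjBy y a b) (p : Polynomial R) :
    SemiconjBy y (Polynomial.aeval a p) (Polynomial.aeval b p) := by
  induction p using Polynomial.induction_on' with
  | add p q hp hq => simpa only [map_add] using hp.add_right hq
  | monomial n r =>
    simpa only [Polynomial.aeval_monomial] using
      SemiconjBy.mul_right (Algebra.commutes r y).symm (h.pow_right n)

variable {M : Type*} [CStarAlgebra M]

lemma semiconjBy_cfc {y a b : M} (h : SemiconjBy y a b) (ha : IsSelfAdjoint a)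
    (hb : IsSelfAdjoint b) {f : ℝ → ℝ} (hf : Continuous f) :
    SemiconjBy y (cfc f a) (cfc f b) := by
  obtain ⟨p, hp⟩ := exists_polynomial_tendstoUniformlyOn_cfc M hf (max ‖a‖ ‖b‖)
  have hpa := (hp.tendsto_at (x := a) ⟨ha, le_max_left _ _⟩).const_mul y
  have hpb := (hp.tendsto_at (x := b) ⟨hb, le_max_right _ _⟩).mul_const y
  exact tendsto_nhds_unique hpa (hpb.congr fun k => (semiconjBy_aeval h (p k)).eq.symm)

lemma cfc_mul_self_mul_cfc {a : M} (ha : IsSelfAdjoint a) {h : ℝ → ℝ} (hh : Continuous h) :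
    cfc h a * a * cfc h a = cfc (fun t => t * h t ^ 2) a := by
  nth_rw 2 [← cfc_id' ℝ a]
  rw [← cfc_mul h _ a, ← cfc_mul _ h a]
  exact cfc_congr fun t _ => by ring

lemma exists_mul_sq_monotone_tendsto {f : ℝ → ℝ} (hf : ContinuousOn f (Set.Ici 0))
    (hf_nonneg : ∀ t, 0 ≤ t → 0 ≤ f t) (hf_zero : f 0 = 0) :
    ∃ h : ℕ → ℝ → ℝ, (∀ n, Continuous (h n)) ∧
      (∀ t, 0 ≤ t → Monotone fun n => t * h n t ^ 2) ∧
      ∀ t, 0 ≤ t → Tendsto (fun n => t * h n t ^ 2) atTop (𝓝 (f t)) := by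
  set h : ℕ → ℝ → ℝ := fun n t => √(f |t| / (|t| + 1 / ((n : ℝ) + 1)))
  have hε (n : ℕ) : 0 < 1 / ((n : ℝ) + 1) := n.one_div_pos_of_nat
  have hmul_sq (n : ℕ) {t : ℝ} (ht : 0 ≤ t) :
      t * h n t ^ 2 = f t * (t / (t + 1 / ((n : ℝ) + 1))) := by
    have := hf_nonneg t ht
    simp only [h, abs_of_nonneg ht]
    rw [Real.sq_sqrt (by positivity)]
    ring
  refine ⟨h, fun n => ?_, fun t ht m n hmn => ?_, fun t ht => ?_⟩
  · exact ((hf.comp_continuous continuous_abs abs_nonneg).div (by fun_prop)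
      fun t => (add_pos_of_nonneg_of_pos (abs_nonneg t) (hε n)).ne').sqrt
  · simp only [hmul_sq _ ht]
    have := hf_nonneg t ht
    gcongr
  · simp only [hmul_sq _ ht]
    rcases ht.eq_or_lt with rfl | ht
    · simp [hf_zero]
    · have hden := tendsto_one_div_add_atTop_nhds_zero_nat (𝕜 := ℝ).const_add t
      rw [add_zero] at hden
      have hquot : Tendsto (fun n : ℕ => t / (t + 1 / ((n : ℝ) + 1))) atTop (𝓝 (t / t)) :=
        tendsto_const_nhds.div hden ht.ne'
      simpa only [div_self ht.ne', mul_one] using hquot.const_mul (f t)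

lemma cfc_sub_const {a : M} (ha : IsSelfAdjoint a) (δ : ℝ) :
    cfc (fun t : ℝ => t - δ) a = a - algebraMap ℝ M δ := by
  rw [cfc_sub (fun t => t) (fun _ => δ) a, cfc_id' ℝ a, cfc_const δ a]

lemma continuous_cutoff (a : M) : Continuous (cutoff a) := by
  refine (LipschitzWith.of_dist_le_mul (K := 1) fun δ η => ?_).continuous
  rw [dist_eq_norm, cutoff, cutoff, ← cfc_sub _ _ a, NNReal.coe_one, one_mul]
  refine norm_cfc_le dist_nonneg fun t _ => (abs_max_sub_max_le_abs _ _ _).trans_eq ?_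
  rw [dist_comm, Real.dist_eq]
  congr 1
  ring

variable [PartialOrder M] [StarOrderedRing M]

namespace IsTracialWeight

variable {τ : M → ℝ≥0∞}

lemma mono (hτ : IsTracialWeight τ) {x y : M} (hx : 0 ≤ x) (hxy : x ≤ y) : τ x ≤ τ y := by
  have hadd := hτ.1 x (y - x) hx (sub_nonneg.2 hxy)
  rw [add_sub_cancel] at hadd
  exact hadd ▸ le_self_add

lemma apply_mul_star_self (hτ : IsTracialWeight τ) (x : M) : τ (x * star x) = τ (star x * x) :=
  hτ.2.2.1 x

lemma le_liminf (hτ : IsTracialWeight τ) {x : M} {u : ℕ → M} (hu : ∀ n, 0 ≤ u n)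
    (h : Tendsto u atTop (𝓝 x)) : τ x ≤ liminf (fun n => τ (u n)) atTop :=
  hτ.2.2.2 x u (ge_of_tendsto' h hu) hu (tendsto_iff_norm_sub_tendsto_zero.1 h)

lemma le_of_tendsto (hτ : IsTracialWeight τ) {x : M} {u : ℕ → M} {b : ℝ≥0∞}
    (hu : ∀ n, 0 ≤ u n) (h : Tendsto u atTop (𝓝 x)) (hb : ∀ n, τ (u n) ≤ b) : τ x ≤ b :=
  (hτ.le_liminf hu h).trans (liminf_le_of_frequently_le' (.of_forall hb))

-- With `z = y h(y*y) = h(yy*) y`, both sides are values of `τ` at `zz*` and `z*z`.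
lemma cfc_mul_sq_mul_star_self (hτ : IsTracialWeight τ) (y : M) {h : ℝ → ℝ} (hh : Continuous h) :
    τ (cfc (fun t => t * h t ^ 2) (y * star y)) = τ (cfc (fun t => t * h t ^ 2) (star y * y)) := by
  have hsemi : y * cfc h (star y * y) = cfc h (y * star y) * y :=
    semiconjBy_cfc (mul_assoc y (star y) y).symm (.star_mul_self y) (.mul_star_self y) hh
  rw [← cfc_mul_self_mul_cfc (.mul_star_self y) hh, ← cfc_mul_self_mul_cfc (.star_mul_self y) hh]
  have htr := hτ.apply_mul_star_self (y * cfc h (star y * y))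
  nth_rw 1 2 [hsemi] at htr
  simpa only [star_mul, (cfc_predicate h (y * star y) : IsSelfAdjoint _).star_eq,
    (cfc_predicate h (star y * y) : IsSelfAdjoint _).star_eq, mul_assoc] using htr

lemma cfc_mul_star_self_le (hτ : IsTracialWeight τ) (y : M) {f : ℝ → ℝ}
    (hf : ContinuousOn f (Set.Ici 0)) (hf_nonneg : ∀ t, 0 ≤ t → 0 ≤ f t) (hf_zero : f 0 = 0) :
    τ (cfc f (y * star y)) ≤ τ (cfc f (star y * y)) := by
  obtain ⟨h, hh, hmono, hlim⟩ := exists_mul_sq_monotone_tendsto hf hf_nonneg hf_zero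
  have hcont (n : ℕ) : Continuous fun t => t * h n t ^ 2 := continuous_id.mul ((hh n).pow 2)
  have hspec {a : M} (ha : 0 ≤ a) : spectrum ℝ a ⊆ Set.Ici 0 :=
    fun t ht => spectrum_nonneg_of_nonneg ha ht
  have hpos (n : ℕ) {a : M} (ha : 0 ≤ a) : 0 ≤ cfc (fun t => t * h n t ^ 2) a :=
    cfc_nonneg fun t ht => mul_nonneg (hspec ha ht) (sq_nonneg _)
  have hle (n : ℕ) {a : M} (ha : 0 ≤ a) : cfc (fun t => t * h n t ^ 2) a ≤ cfc f a :=
    cfc_mono (fun t ht => (hmono t (hspec ha ht)).ge_of_tendsto (hlim t (hspec ha ht)) n)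
      (hcont n).continuousOn (hf.mono (hspec ha))
  have hyy : 0 ≤ y * star y := mul_star_self_nonneg y
  have hunif : TendstoUniformlyOn (fun n t => t * h n t ^ 2) f atTop (spectrum ℝ (y * star y)) :=
    Monotone.tendstoUniformlyOn_of_forall_tendsto
      (ContinuousFunctionalCalculus.isCompact_spectrum _) (fun n => (hcont n).continuousOn)
      (fun t ht => hmono t (hspec hyy ht)) (hf.mono (hspec hyy))
      fun t ht => hlim t (hspec hyy ht)
  refine hτ.le_of_tendsto (fun n => hpos n hyy) (tendsto_cfc_fun hunif
    (.of_forall fun n => (hcont n).continuousOn)) fun n => ?_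
  rw [hτ.cfc_mul_sq_mul_star_self y (hh n)]
  exact hτ.mono (hpos n (star_mul_self_nonneg y)) (hle n (star_mul_self_nonneg y))

lemma cfc_mul_star_self (hτ : IsTracialWeight τ) (y : M) {f : ℝ → ℝ}
    (hf : ContinuousOn f (Set.Ici 0)) (hf_nonneg : ∀ t, 0 ≤ t → 0 ≤ f t) (hf_zero : f 0 = 0) :
    τ (cfc f (y * star y)) = τ (cfc f (star y * y)) :=
  (hτ.cfc_mul_star_self_le y hf hf_nonneg hf_zero).antisymm <| by
    simpa only [star_star] using hτ.cfc_mul_star_self_le (star y) hf hf_nonneg hf_zero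

lemma rpow_mul_star_self (hτ : IsTracialWeight τ) (y : M) {s : ℝ} (hs : 0 < s) :
    τ ((y * star y) ^ s) = τ ((star y * y) ^ s) := by
  rw [CFC.rpow_eq_cfc_real (mul_star_self_nonneg y), CFC.rpow_eq_cfc_real (star_mul_self_nonneg y)]
  exact hτ.cfc_mul_star_self y (Real.continuous_rpow_const hs.le).continuousOn
    (fun t ht => Real.rpow_nonneg ht s) (Real.zero_rpow hs.ne')

lemma rpow_mul_mul_star_le (hτ : IsTracialWeight τ) {c y : M} (hc : star c * c ≤ 1) (hy : 0 ≤ y)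
    {s : ℝ} (hs : s ∈ Set.Ioc 0 1) : τ ((c * y * star c) ^ s) ≤ τ (y ^ s) := by
  set r := CFC.sqrt y
  have hr : star r = r := (IsSelfAdjoint.of_nonneg (CFC.sqrt_nonneg y)).star_eq
  have hrr : r * r = y := CFC.sqrt_mul_sqrt_self y hy
  have hleft : c * y * star c = c * r * star (c * r) := by
    rw [← hrr, star_mul, hr]
    simp only [mul_assoc]
  have hright : star (c * r) * (c * r) ≤ y := calc
    _ = star r * (star c * c) * r := by simp only [star_mul, mul_assoc]
    _ ≤ star r * 1 * r := star_left_conjugate_le_conjugate hc r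
    _ = y := by rw [mul_one, hr, hrr]
  rw [hleft, hτ.rpow_mul_star_self _ hs.1]
  exact hτ.mono CFC.rpow_nonneg (CFC.rpow_le_rpow (Set.Ioc_subset_Icc_self hs) hright)

lemma mul_mul_star_le (hτ : IsTracialWeight τ) {c y : M} (hc : star c * c ≤ 1) (hy : 0 ≤ y) :
    τ (c * y * star c) ≤ τ y := by
  simpa only [CFC.rpow_one _ hy, CFC.rpow_one _ (star_right_conjugate_nonneg hy c)] using
    hτ.rpow_mul_mul_star_le hc hy (s := 1) ⟨one_pos, le_rfl⟩

end IsTracialWeight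

lemma cutoff_nonneg (a : M) (δ : ℝ) : 0 ≤ cutoff a δ :=
  cfc_nonneg fun _ _ => le_max_right _ _

lemma sub_algebraMap_le_cutoff {a : M} (ha : IsSelfAdjoint a) (δ : ℝ) :
    a - algebraMap ℝ M δ ≤ cutoff a δ := by
  rw [← cfc_sub_const ha]
  exact cfc_mono fun t _ => le_max_left _ _

lemma cutoff_rpow {a : M} (ha : IsSelfAdjoint a) (δ : ℝ) {s : ℝ} (hs : 0 ≤ s) :
    cutoff a δ ^ s = cfc (fun t => max (t - δ) 0 ^ s) a := by
  rw [CFC.rpow_eq_cfc_real (cutoff_nonneg a δ)]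
  exact (cfc_comp' (fun t : ℝ => t ^ s) (fun t : ℝ => max (t - δ) 0) a
    (Real.continuous_rpow_const hs).continuousOn).symm

lemma continuous_cutoff_rpow (a : M) {s : ℝ} (hs : 0 < s) :
    Continuous fun δ => cutoff a δ ^ s := by
  lift s to NNReal using hs.le
  simp only [← CFC.nnrpow_eq_rpow (NNReal.coe_pos.1 hs)]
  exact (CFC.continuousOn_nnrpow s).comp_continuous (continuous_cutoff a) (cutoff_nonneg a)

-- The contraction is `c = h(a)`, where `h` vanishes on `(-∞, δ]` and equals `1` on `[δ + ε, ∞)`.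
lemma exists_cutoff_add_le_conjugate {a b : M} (ha : IsSelfAdjoint a) (hab : a ≤ b) (δ : ℝ)
    {ε : ℝ} (hε : 0 < ε) :
    ∃ c : M, star c * c ≤ 1 ∧ cutoff a (δ + ε) ≤ c * cutoff b δ * star c := by
  have hb : IsSelfAdjoint b := by
    simpa only [sub_add_cancel] using (IsSelfAdjoint.of_nonneg (sub_nonneg.2 hab)).add ha
  set h : ℝ → ℝ := fun t => min 1 (max (t - δ) 0 / ε)
  have hh : Continuous h := by fun_prop
  have hh_nonneg (t : ℝ) : 0 ≤ h t := by positivity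
  have hstar : star (cfc h a) = cfc h a := (cfc_predicate h a : IsSelfAdjoint _).star_eq
  refine ⟨cfc h a, ?_, ?_⟩
  · rw [hstar, ← cfc_mul h h a]
    exact cfc_le_one _ a fun t _ => mul_le_one₀ (min_le_left _ _) (hh_nonneg t) (min_le_left _ _)
  calc cutoff a (δ + ε)
      ≤ cfc (fun t => h t * (t - δ) * h t) a := cfc_mono fun t _ => by
        rcases le_total t δ with htδ | hδt
        · have ht_zero : h t = 0 := by simp [h, htδ]
          rw [ht_zero, max_eq_right (by linarith), mul_zero]
        rcases le_total t (δ + ε) with htε | hεt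
        · rw [max_eq_right (by linarith)]
          exact mul_nonneg (mul_nonneg (hh_nonneg t) (sub_nonneg.2 hδt)) (hh_nonneg t)
        · have ht_one : h t = 1 :=
            min_eq_left <| (one_le_div hε).2 (le_max_of_le_left (by linarith))
          rw [ht_one, max_eq_left (by linarith)]
          linarith
    _ = cfc h a * (a - algebraMap ℝ M δ) * star (cfc h a) := by
        rw [hstar, ← cfc_sub_const ha, ← cfc_mul h _ a, ← cfc_mul _ h a]
    _ ≤ cfc h a * cutoff b δ * star (cfc h a) := by
        refine star_right_conjugate_le_conjugate ?_ _
        exact (sub_le_sub_right hab _).trans (sub_algebraMap_le_cutoff hb δ)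

lemma dimFn_eq_iSup_rpow (τ : M → ℝ≥0∞) {x : M} (hx : 0 ≤ x) :
    dimFn τ x = ⨆ n : ℕ, τ (x ^ ((1 : ℝ) / (n + 1))) := by
  simp only [dimFn, CFC.rpow_eq_cfc_real hx]

lemma IsTracialWeight.rpow_cutoff_mono {τ : M → ℝ≥0∞} (hτ : IsTracialWeight τ) {a b : M}
    (ha : IsSelfAdjoint a) (hab : a ≤ b) (δ : ℝ) {s : ℝ} (hs : s ∈ Set.Ioc 0 1) :
    τ (cutoff a δ ^ s) ≤ τ (cutoff b δ ^ s) := by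
  have hshift : Tendsto (fun n : ℕ => δ + 1 / ((n : ℝ) + 1)) atTop (𝓝 δ) := by
    simpa only [add_zero] using (tendsto_one_div_add_atTop_nhds_zero_nat (𝕜 := ℝ)).const_add δ
  refine hτ.le_of_tendsto (fun _ => CFC.rpow_nonneg)
    (((continuous_cutoff_rpow a hs.1).tendsto δ).comp hshift) fun n => ?_
  obtain ⟨c, hc, hle⟩ := exists_cutoff_add_le_conjugate ha hab δ n.one_div_pos_of_nat
  calc τ (cutoff a (δ + 1 / ((n : ℝ) + 1)) ^ s)
      ≤ τ ((c * cutoff b δ * star c) ^ s) :=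
        hτ.mono CFC.rpow_nonneg (CFC.rpow_le_rpow (Set.Ioc_subset_Icc_self hs) hle)
    _ ≤ τ (cutoff b δ ^ s) := hτ.rpow_mul_mul_star_le hc (cutoff_nonneg b δ) hs

end CStarAlgebra

section MultiplierAlgebra

variable {A : Type*} [NonUnitalCStarAlgebra A]

lemma multiplier_fst_mul (m : 𝓜(ℂ, A)) (a b : A) : m.fst (a * b) = m.fst a * b := by
  rw [← sub_eq_zero, ← CStarRing.star_mul_self_eq_zero_iff, mul_sub, ← m.central, ← mul_assoc,
    ← mul_assoc, ← m.central, sub_self]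

lemma multiplier_mul_coe (m : 𝓜(ℂ, A)) (a : A) : m * (a : 𝓜(ℂ, A)) = (m.fst a : A) := by
  refine DoubleCentralizer.ext _ _ _ _ (Prod.ext ?_ ?_) <;>
    refine ContinuousLinearMap.ext fun x => ?_
  · exact multiplier_fst_mul m a x
  · exact m.central x a

lemma multiplier_star_coe (a : A) : star (a : 𝓜(ℂ, A)) = (star a : A) :=
  (map_star (DoubleCentralizer.coeHom (𝕜 := ℂ) (A := A)) a).symm

lemma multiplier_norm_coe (a : A) : ‖(a : 𝓜(ℂ, A))‖ = ‖a‖ := by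
  rw [← DoubleCentralizer.norm_fst, DoubleCentralizer.coe_fst,
    ContinuousLinearMap.opNorm_mul_apply]

lemma multiplier_norm_mul_coe (m : 𝓜(ℂ, A)) (a : A) : ‖m * (a : 𝓜(ℂ, A))‖ = ‖m.fst a‖ := by
  rw [multiplier_mul_coe, multiplier_norm_coe]

lemma multiplier_ext {m n : 𝓜(ℂ, A)} (h : ∀ a : A, m * (a : 𝓜(ℂ, A)) = n * (a : 𝓜(ℂ, A))) :
    m = n := by
  have hfst : (m - n).fst = 0 := ContinuousLinearMap.ext fun a => norm_eq_zero.1 <| by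
    rw [← multiplier_norm_mul_coe, sub_mul, h a, sub_self, norm_zero]
  rw [← sub_eq_zero, ← norm_eq_zero, ← DoubleCentralizer.norm_fst, hfst, norm_zero]

namespace StrictTendsto

variable {T : ℕ → 𝓜(ℂ, A)} {L : 𝓜(ℂ, A)}

lemma tendsto_mul_coe (h : StrictTendsto T L) (a : A) :
    Tendsto (fun n => T n * (a : 𝓜(ℂ, A))) atTop (𝓝 (L * (a : 𝓜(ℂ, A)))) := by
  rw [tendsto_iff_norm_sub_tendsto_zero]
  simpa only [sub_mul] using (h a).1

lemma tendsto_coe_mul (h : StrictTendsto T L) (a : A) :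
    Tendsto (fun n => (a : 𝓜(ℂ, A)) * T n) atTop (𝓝 ((a : 𝓜(ℂ, A)) * L)) := by
  rw [tendsto_iff_norm_sub_tendsto_zero]
  simpa only [mul_sub] using (h a).2

lemma of_isSelfAdjoint (hT : ∀ n, IsSelfAdjoint (T n)) (hL : IsSelfAdjoint L)
    (h : ∀ a : A, Tendsto (fun n => T n * (a : 𝓜(ℂ, A))) atTop (𝓝 (L * (a : 𝓜(ℂ, A))))) :
    StrictTendsto T L := fun a => by
  have hleft (b : A) : Tendsto (fun n => ‖(T n - L) * (b : 𝓜(ℂ, A))‖) atTop (𝓝 0) := by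
    simpa only [sub_mul] using tendsto_iff_norm_sub_tendsto_zero.1 (h b)
  refine ⟨hleft a, (hleft (star a)).congr fun n => ?_⟩
  rw [← multiplier_star_coe, ← norm_star, star_mul, star_star, ((hT n).sub hL).star_eq]

lemma unique {K : 𝓜(ℂ, A)} (hL : StrictTendsto T L) (hK : StrictTendsto T K) : L = K :=
  multiplier_ext fun a => tendsto_nhds_unique (hL.tendsto_mul_coe a) (hK.tendsto_mul_coe a)

lemma isSelfAdjoint (h : StrictTendsto T L) (hT : ∀ n, IsSelfAdjoint (T n)) :
    IsSelfAdjoint L := by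
  refine (multiplier_ext fun a => ?_ : star L = L)
  have hstar := (h.tendsto_coe_mul (star a)).star
  simp only [star_mul, multiplier_star_coe, star_star, (hT _).star_eq] at hstar
  exact tendsto_nhds_unique hstar (h.tendsto_mul_coe a)

lemma sub_const (h : StrictTendsto T L) (x : 𝓜(ℂ, A)) :
    StrictTendsto (fun n => T n - x) (L - x) := by
  simpa only [StrictTendsto, sub_sub_sub_cancel_right] using h

lemma comp_add (h : StrictTendsto T L) (k : ℕ) : StrictTendsto (fun n => T (n + k)) L :=
  fun a => ⟨(tendsto_add_atTop_iff_nat k).2 (h a).1, (tendsto_add_atTop_iff_nat k).2 (h a).2⟩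

lemma star_mul_mul (h : StrictTendsto T L) (hT : ∀ n, IsSelfAdjoint (T n)) (y : 𝓜(ℂ, A)) :
    StrictTendsto (fun n => star y * T n * y) (star y * L * y) :=
  of_isSelfAdjoint (fun n => (hT n).conjugate' y) ((h.isSelfAdjoint hT).conjugate' y) fun a => by
    simpa only [mul_assoc, multiplier_mul_coe y a] using
      (h.tendsto_mul_coe (y.fst a)).const_mul (star y)

lemma exists_norm_le (h : StrictTendsto T L) : ∃ C, ∀ n, ‖T n‖ ≤ C := by
  simp only [← DoubleCentralizer.norm_fst]
  refine banach_steinhaus fun a => ?_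
  obtain ⟨C, hC⟩ := (h.tendsto_mul_coe a).norm.bddAbove_range
  exact ⟨C, fun n => multiplier_norm_mul_coe (T n) a ▸ hC (Set.mem_range_self n)⟩

lemma tendsto_mul (h : StrictTendsto T L) {x : ℕ → 𝓜(ℂ, A)} {a : A}
    (hx : Tendsto x atTop (𝓝 (a : 𝓜(ℂ, A)))) :
    Tendsto (fun n => T n * x n) atTop (𝓝 (L * (a : 𝓜(ℂ, A)))) := by
  obtain ⟨C, hC⟩ := h.exists_norm_le
  have herr : Tendsto (fun n => T n * (x n - a)) atTop (𝓝 0) :=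
    isBoundedUnder_le_mul_tendsto_zero
      (isBoundedUnder_of ⟨C, hC⟩) (tendsto_sub_nhds_zero_iff.2 hx)
  simpa only [mul_sub, sub_add_cancel, zero_add] using herr.add (h.tendsto_mul_coe a)

lemma tendsto_pow_mul_coe (h : StrictTendsto T L) (k : ℕ) (a : A) :
    Tendsto (fun n => T n ^ k * (a : 𝓜(ℂ, A))) atTop (𝓝 (L ^ k * (a : 𝓜(ℂ, A)))) := by
  induction k with
  | zero => simpa only [pow_zero] using tendsto_const_nhds
  | succ k ih =>
    rw [multiplier_mul_coe] at ih
    simpa only [pow_succ', mul_assoc, multiplier_mul_coe (L ^ k) a] using h.tendsto_mul ih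

lemma tendsto_aeval_mul_coe (h : StrictTendsto T L) (p : Polynomial ℝ) (a : A) :
    Tendsto (fun n => Polynomial.aeval (T n) p * (a : 𝓜(ℂ, A))) atTop
      (𝓝 (Polynomial.aeval L p * (a : 𝓜(ℂ, A)))) := by
  induction p using Polynomial.induction_on' with
  | add p q hp hq => simpa only [map_add, add_mul] using hp.add hq
  | monomial k r =>
    simpa only [Polynomial.aeval_monomial, mul_assoc] using
      (h.tendsto_pow_mul_coe k a).const_mul (algebraMap ℝ 𝓜(ℂ, A) r)

lemma cfc_of_continuous (h : StrictTendsto T L) (hT : ∀ n, IsSelfAdjoint (T n)) {f : ℝ → ℝ}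
    (hf : Continuous f) : StrictTendsto (fun n => cfc f (T n)) (cfc f L) := by
  refine of_isSelfAdjoint (fun n => cfc_predicate f (T n)) (cfc_predicate f L) fun a => ?_
  obtain ⟨C, hC⟩ := h.exists_norm_le
  obtain ⟨p, hp⟩ := exists_polynomial_tendstoUniformlyOn_cfc 𝓜(ℂ, A) hf (max C ‖L‖)
  have hmul_coe : UniformContinuous fun x : 𝓜(ℂ, A) => x * (a : 𝓜(ℂ, A)) :=
    ((ContinuousLinearMap.mul ℂ 𝓜(ℂ, A)).flip a).uniformContinuous
  have hunif : TendstoUniformly (fun k n => Polynomial.aeval (T n) (p k) * (a : 𝓜(ℂ, A)))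
      (fun n => cfc f (T n) * (a : 𝓜(ℂ, A))) atTop := by
    rw [← tendstoUniformlyOn_univ]
    exact hmul_coe.comp_tendstoUniformlyOn
      ((hp.comp T).mono fun n _ => ⟨hT n, (hC n).trans (le_max_left _ _)⟩)
  have hlim := (hp.tendsto_at (x := L) ⟨h.isSelfAdjoint hT, le_max_right _ _⟩).mul_const
    (a : 𝓜(ℂ, A))
  exact hunif.tendsto_of_eventually_tendsto
    (.of_forall fun k => h.tendsto_aeval_mul_coe (p k) a) hlim

variable [PartialOrder 𝓜(ℂ, A)] [StarOrderedRing 𝓜(ℂ, A)]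

lemma nonneg (h : StrictTendsto T L) (hT : ∀ n, 0 ≤ T n) : 0 ≤ L := by
  have habs {x : 𝓜(ℂ, A)} (hx : 0 ≤ x) : cfc (fun t : ℝ => |t|) x = x := by
    nth_rw 2 [← cfc_id' ℝ x]
    exact cfc_congr fun t ht => abs_of_nonneg (spectrum_nonneg_of_nonneg hx ht)
  have hlim := h.cfc_of_continuous (fun n => .of_nonneg (hT n)) continuous_abs
  simp only [habs (hT _)] at hlim
  rw [h.unique hlim]
  exact cfc_nonneg fun t _ => abs_nonneg t

lemma le_of_monotone (h : StrictTendsto T L) (hmono : Monotone T) (n : ℕ) : T n ≤ L :=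
  sub_nonneg.1 <| ((h.comp_add n).sub_const (T n)).nonneg fun _ =>
    sub_nonneg.2 (hmono (Nat.le_add_left _ _))

end StrictTendsto

lemma exists_nonneg_forall_le_smul {B : Type*} [NonUnitalCStarAlgebra B] [PartialOrder B]
    [StarOrderedRing B] {x : ℕ → B} (hx : ∀ j, 0 ≤ x j) :
    ∃ h : B, 0 ≤ h ∧ ∀ j, ∃ K : ℝ, 0 ≤ K ∧ x j ≤ K • h := by
  set w : ℕ → ℝ := fun j => (1 / 2) ^ j / (‖x j‖ + 1)
  have hw (j : ℕ) : 0 < w j := by positivity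
  have hsum : Summable fun j => w j • x j := by
    refine .of_norm_bounded summable_geometric_two fun j => ?_
    rw [norm_smul, Real.norm_of_nonneg (hw j).le, div_mul_eq_mul_div]
    exact div_le_of_le_mul₀ (by positivity) (by positivity) (by gcongr; linarith)
  have hpos (j : ℕ) : 0 ≤ w j • x j := smul_nonneg (hw j).le (hx j)
  refine ⟨∑' j, w j • x j, tsum_nonneg hpos, fun j => ⟨(w j)⁻¹, (inv_pos.2 (hw j)).le, ?_⟩⟩
  calc x j = (w j)⁻¹ • (w j • x j) := (inv_smul_smul₀ (hw j).ne' _).symm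
    _ ≤ (w j)⁻¹ • ∑' j, w j • x j :=
        smul_le_smul_of_nonneg_left (hsum.le_tsum j fun i _ => hpos i) (inv_pos.2 (hw j)).le

/-- The image of `h ≥ 0` under `t ↦ min (t / ε) 1` with `ε = 1 / (n + 1)`: an increasing sequence
of positive contractions in the ideal generated by `h`. Dividing by `max t ε` displays the
factor `t` and keeps the function continuous on the whole line. -/
noncomputable def unitApprox {M : Type*} [CStarAlgebra M] (h : M) (n : ℕ) : M :=
  cfc (fun t : ℝ => t / max t (1 / (n + 1))) h

lemma continuous_div_max_one_div (n : ℕ) :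
    Continuous fun t : ℝ => t / max t (1 / ((n : ℝ) + 1)) :=
  continuous_id.div (by fun_prop) fun _ =>
    (lt_max_of_lt_right n.one_div_pos_of_nat).ne'

section unitApprox

variable {M : Type*} [CStarAlgebra M] [PartialOrder M] [StarOrderedRing M] {h : M}

lemma unitApprox_sq (hh : 0 ≤ h) (n : ℕ) :
    unitApprox h n ^ 2 = cfc (fun t : ℝ => (t / max t (1 / (n + 1))) ^ 2) h :=
  (cfc_pow _ 2 h (continuous_div_max_one_div n).continuousOn).symm

lemma unitApprox_sq_nonneg (hh : 0 ≤ h) (n : ℕ) : 0 ≤ unitApprox h n ^ 2 := by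
  rw [unitApprox_sq hh]
  exact cfc_nonneg fun t _ => sq_nonneg _

lemma unitApprox_sq_le_one (hh : 0 ≤ h) (n : ℕ) : unitApprox h n ^ 2 ≤ 1 := by
  rw [unitApprox_sq hh]
  refine cfc_le_one _ h fun t ht => ?_
  have ht := spectrum_nonneg_of_nonneg hh ht
  exact pow_le_one₀ (by positivity) (div_le_one_of_le₀ (le_max_left _ _) (by positivity))

lemma unitApprox_sq_monotone (hh : 0 ≤ h) : Monotone fun n => unitApprox h n ^ 2 := by
  intro m n hmn
  simp only [unitApprox_sq hh]
  refine cfc_mono (fun t ht => ?_) ((continuous_div_max_one_div m).pow 2).continuousOn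
    ((continuous_div_max_one_div n).pow 2).continuousOn
  have ht := spectrum_nonneg_of_nonneg hh ht
  gcongr

lemma norm_one_sub_unitApprox_sq_conjugate_le (hh : 0 ≤ h) (n : ℕ) :
    ‖(1 - unitApprox h n ^ 2) * h * (1 - unitApprox h n ^ 2)‖ ≤ 1 / (n + 1) := by
  set q : ℝ → ℝ := fun t => t / max t (1 / (n + 1))
  have hq : Continuous q := continuous_div_max_one_div n
  have hcfc : 1 - unitApprox h n ^ 2 = cfc (fun t => 1 - q t ^ 2) h := by
    rw [unitApprox_sq hh, cfc_sub (fun _ => 1) (fun t => q t ^ 2) h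
      continuousOn_const (hq.pow 2).continuousOn, cfc_const_one ℝ h]
  have hcont : Continuous fun t => 1 - q t ^ 2 := by fun_prop
  rw [hcfc, cfc_mul_self_mul_cfc (.of_nonneg hh) hcont]
  refine norm_cfc_le (by positivity) fun t ht => ?_
  have ht := spectrum_nonneg_of_nonneg hh ht
  rw [Real.norm_of_nonneg (by positivity)]
  rcases le_total t (1 / (n + 1)) with hle | hge
  · have hq_sq : q t ^ 2 ≤ 1 :=
      pow_le_one₀ (by positivity) (div_le_one_of_le₀ (le_max_left _ _) (by positivity))
    have hcontr : (1 - q t ^ 2) ^ 2 ≤ 1 :=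
      pow_le_one₀ (sub_nonneg.2 hq_sq) (sub_le_self 1 (sq_nonneg _))
    exact (mul_le_of_le_one_right ht hcontr).trans hle
  · have hq_one : q t = 1 := by
      simp only [q, max_eq_left hge]
      exact div_self (n.one_div_pos_of_nat.trans_le hge).ne'
    rw [hq_one, one_pow, sub_self, zero_pow two_ne_zero, mul_zero]
    exact n.one_div_pos_of_nat.le

lemma norm_one_sub_unitApprox_sq_mul_sq_le (hh : 0 ≤ h) {z : M} {K : ℝ} (hK : 0 ≤ K)
    (hz : z * star z ≤ K • h) (n : ℕ) :
    ‖(1 - unitApprox h n ^ 2) * z‖ ^ 2 ≤ K * (1 / (n + 1)) := by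
  set m := 1 - unitApprox h n ^ 2
  have hm : star m = m :=
    ((IsSelfAdjoint.one M).sub (.pow (cfc_predicate _ h) 2)).star_eq
  calc ‖m * z‖ ^ 2 = ‖m * (z * star z) * star m‖ := by
        rw [sq, ← CStarRing.norm_self_mul_star, star_mul]
        simp only [mul_assoc]
    _ ≤ ‖m * (K • h) * star m‖ := CStarAlgebra.norm_le_norm_of_nonneg_of_le
        (star_right_conjugate_nonneg (mul_star_self_nonneg z) m)
        (star_right_conjugate_le_conjugate hz m)
    _ = K * ‖m * h * m‖ := by
        rw [hm, mul_smul_comm, smul_mul_assoc, norm_smul, Real.norm_of_nonneg hK]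
    _ ≤ K * (1 / (n + 1)) := by
        gcongr
        exact norm_one_sub_unitApprox_sq_conjugate_le hh n

lemma tendsto_unitApprox_sq_mul (hh : 0 ≤ h) {z : M} {K : ℝ} (hK : 0 ≤ K)
    (hz : z * star z ≤ K • h) :
    Tendsto (fun n => unitApprox h n ^ 2 * z) atTop (𝓝 z) := by
  have hsq : Tendsto (fun n => ‖(1 - unitApprox h n ^ 2) * z‖ ^ 2) atTop (𝓝 0) :=
    squeeze_zero (fun _ => by positivity) (norm_one_sub_unitApprox_sq_mul_sq_le hh hK hz)
      (by simpa only [mul_zero] using tendsto_one_div_add_atTop_nhds_zero_nat.const_mul K)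
  have hnorm := hsq.sqrt
  simp only [Real.sqrt_sq (norm_nonneg _), Real.sqrt_zero, sub_mul, one_mul] at hnorm
  rw [tendsto_iff_norm_sub_tendsto_zero]
  simpa only [norm_sub_rev] using hnorm

end unitApprox

lemma exists_coe_eq_unitApprox {h : A} (hh : IsSelfAdjoint h) (n : ℕ) :
    ∃ a : A, (a : 𝓜(ℂ, A)) = unitApprox (h : 𝓜(ℂ, A)) n := by
  have hsa : IsSelfAdjoint (h : 𝓜(ℂ, A)) := by
    rw [IsSelfAdjoint, multiplier_star_coe, hh.star_eq]
  set g : ℝ → ℝ := fun t => (max t (1 / ((n : ℝ) + 1)))⁻¹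
  have hg : Continuous g := Continuous.inv₀ (by fun_prop) fun _ =>
    (lt_max_of_lt_right n.one_div_pos_of_nat).ne'
  refine ⟨(cfc g (h : 𝓜(ℂ, A))).fst h, ?_⟩
  rw [← multiplier_mul_coe]
  nth_rw 2 [← cfc_id' ℝ (h : 𝓜(ℂ, A))]
  rw [← cfc_mul g _ _ hg.continuousOn]
  exact cfc_congr fun t _ => inv_mul_eq_div _ _

lemma StrictTendsto.of_tendsto_mul_coe_approximateUnit {T : ℕ → 𝓜(ℂ, A)} {L : 𝓜(ℂ, A)}
    (hT : ∀ n, IsSelfAdjoint (T n)) (hL : IsSelfAdjoint L) {C : ℝ} (hC : ∀ n, ‖T n‖ ≤ C)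
    {e : ℕ → A} (he : ∀ a : A, Tendsto (fun j => e j * a) atTop (𝓝 a))
    (h : ∀ j, Tendsto (fun n => T n * (e j : 𝓜(ℂ, A))) atTop (𝓝 (L * (e j : 𝓜(ℂ, A))))) :
    StrictTendsto T L := by
  refine of_isSelfAdjoint hT hL fun a => ?_
  have hcoe : Isometry (DoubleCentralizer.coeHom (𝕜 := ℂ) (A := A)) :=
    AddMonoidHomClass.isometry_of_norm _ multiplier_norm_coe
  have hea : Tendsto (fun j => ((e j * a : A) : 𝓜(ℂ, A))) atTop (𝓝 (a : 𝓜(ℂ, A))) :=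
    (hcoe.continuous.tendsto a).comp (he a)
  have hunif : TendstoUniformly (fun j n => T n * ((e j * a : A) : 𝓜(ℂ, A)))
      (fun n => T n * (a : 𝓜(ℂ, A))) atTop := by
    have herr := (tendsto_iff_norm_sub_tendsto_zero.1 hea).const_mul C
    rw [mul_zero] at herr
    refine Metric.tendstoUniformly_iff.2 fun ε hε => ?_
    filter_upwards [herr.eventually_lt_const hε] with j hj n
    rw [dist_comm, dist_eq_norm, ← mul_sub]
    exact ((norm_mul_le _ _).trans (by gcongr; exact hC n)).trans_lt hj
  refine hunif.tendsto_of_eventually_tendsto (.of_forall fun j => ?_) (hea.const_mul L)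
  have hcoe_mul : ((e j * a : A) : 𝓜(ℂ, A)) = (e j : 𝓜(ℂ, A)) * (a : 𝓜(ℂ, A)) :=
    map_mul (DoubleCentralizer.coeHom (𝕜 := ℂ) (A := A)) (e j) a
  simpa only [hcoe_mul, ← mul_assoc] using (h j).mul_const (a : 𝓜(ℂ, A))

lemma SigmaUnital.exists_monotone_sq_strictTendsto_one [PartialOrder 𝓜(ℂ, A)]
    [StarOrderedRing 𝓜(ℂ, A)] (hσ : SigmaUnital A) :
    ∃ c : ℕ → A, (∀ n, IsSelfAdjoint (c n : 𝓜(ℂ, A))) ∧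
      Monotone (fun n => (c n : 𝓜(ℂ, A)) ^ 2) ∧
      StrictTendsto (fun n => (c n : 𝓜(ℂ, A)) ^ 2) 1 := by
  obtain ⟨e, he⟩ := hσ
  let _ : PartialOrder A := CStarAlgebra.spectralOrder A
  have _ : StarOrderedRing A := CStarAlgebra.spectralOrderedRing A
  obtain ⟨h, hh, hle⟩ := exists_nonneg_forall_le_smul fun j => mul_star_self_nonneg (e j)
  choose c hc using exists_coe_eq_unitApprox (IsSelfAdjoint.of_nonneg hh)
  have hhM : 0 ≤ (h : 𝓜(ℂ, A)) := map_nonneg (DoubleCentralizer.coeHom (𝕜 := ℂ) (A := A)) hh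
  have hsa (n : ℕ) : IsSelfAdjoint (c n : 𝓜(ℂ, A)) := hc n ▸ cfc_predicate _ _
  refine ⟨c, hsa, ?_, .of_tendsto_mul_coe_approximateUnit (fun n => (hsa n).pow 2)
    (.one _) (C := 1) (fun n => ?_) (e := e) (fun a => ?_) fun j => ?_⟩
  · simpa only [hc] using unitApprox_sq_monotone hhM
  · rw [hc]
    exact CStarAlgebra.norm_le_one_iff_of_nonneg _ (unitApprox_sq_nonneg hhM n) |>.2
      (unitApprox_sq_le_one hhM n)
  · rw [tendsto_iff_norm_sub_tendsto_zero]
    simpa only [norm_sub_rev] using (he a).2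
  · obtain ⟨K, hK, hjK⟩ := hle j
    have hjM : (e j : 𝓜(ℂ, A)) * star (e j : 𝓜(ℂ, A)) ≤ K • (h : 𝓜(ℂ, A)) := by
      have hmono := OrderHomClass.mono (DoubleCentralizer.coeHom (𝕜 := ℂ) (A := A)) hjK
      rwa [map_mul, map_star, ← Complex.coe_smul, map_smul, Complex.coe_smul] at hmono
    simpa only [hc, one_mul] using tendsto_unitApprox_sq_mul hhM hK hjM

/-- Normality of the extended trace on `A**`, as seen by increasing sequences of multipliers: there
the strong limit of the paper is replaced by the strict limit. -/
def IsStrictlyNormal [PartialOrder 𝓜(ℂ, A)] (τ : 𝓜(ℂ, A) → ℝ≥0∞) : Prop :=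
  ∀ (x : 𝓜(ℂ, A)) (u : ℕ → 𝓜(ℂ, A)), 0 ≤ x → (∀ n, 0 ≤ u n) →
    Monotone u → StrictTendsto u x → τ x = ⨆ n, τ (u n)

section TracialWeight

variable [PartialOrder 𝓜(ℂ, A)] [StarOrderedRing 𝓜(ℂ, A)] {τ : 𝓜(ℂ, A) → ℝ≥0∞}
  {T : ℕ → 𝓜(ℂ, A)} {L : 𝓜(ℂ, A)}

lemma IsTracialWeight.le_liminf_of_strictTendsto (hτ : IsTracialWeight τ) (hσ : SigmaUnital A)
    (hnormal : IsStrictlyNormal τ) (hT : ∀ n, 0 ≤ T n) (h : StrictTendsto T L) :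
    τ L ≤ liminf (fun n => τ (T n)) atTop := by
  obtain ⟨c, hc_sa, hc_mono, hc_one⟩ := hσ.exists_monotone_sq_strictTendsto_one
  have hc_le (k : ℕ) : star (c k : 𝓜(ℂ, A)) * c k ≤ 1 := by
    rw [(hc_sa k).star_eq, ← sq]
    exact hc_one.le_of_monotone hc_mono k
  have hL : 0 ≤ L := h.nonneg hT
  set r := CFC.sqrt L
  have hr : star r = r := (IsSelfAdjoint.of_nonneg (CFC.sqrt_nonneg L)).star_eq
  have hrr : star r * r = L := by rw [hr, CFC.sqrt_mul_sqrt_self L]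
  have hlim : StrictTendsto (fun k => star r * (c k : 𝓜(ℂ, A)) ^ 2 * r) L := by
    simpa only [mul_one, hrr] using hc_one.star_mul_mul (fun k => (hc_sa k).pow 2) r
  have hmono : Monotone fun k => star r * (c k : 𝓜(ℂ, A)) ^ 2 * r :=
    fun k l hkl => star_left_conjugate_le_conjugate (hc_mono hkl) r
  have hswap (k : ℕ) :
      τ (star r * (c k : 𝓜(ℂ, A)) ^ 2 * r) = τ (c k * L * star (c k : 𝓜(ℂ, A))) := by
    have htrace := hτ.apply_mul_star_self (star r * c k)
    rw [star_mul, star_star, (hc_sa k).star_eq] at htrace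
    rw [(hc_sa k).star_eq, ← hrr]
    convert htrace using 2
    · noncomm_ring
    · rw [hr]; noncomm_ring
  have hcompress (k : ℕ) :
      τ (c k * L * star (c k : 𝓜(ℂ, A))) ≤ liminf (fun n => τ (T n)) atTop := by
    refine (hτ.le_liminf (fun n => star_right_conjugate_nonneg (hT n) (c k : 𝓜(ℂ, A)))
      ((h.tendsto_coe_mul (c k)).mul_const _)).trans (liminf_le_liminf (.of_forall fun n => ?_))
    exact hτ.mul_mul_star_le (hc_le k) (hT n)
  rw [hnormal L _ hL (fun k => star_left_conjugate_nonneg ((hc_sa k).sq_nonneg) r) hmono hlim]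
  exact iSup_le fun k => (hswap k).trans_le (hcompress k)

lemma IsTracialWeight.iSup_rpow_cutoff_eq (hτ : IsTracialWeight τ) (hσ : SigmaUnital A)
    (hnormal : IsStrictlyNormal τ) (hT : ∀ n, IsSelfAdjoint (T n)) (hmono : Monotone T)
    (h : StrictTendsto T L) (δ : ℝ) {s : ℝ} (hs : s ∈ Set.Ioc 0 1) :
    ⨆ n, τ (cutoff (T n) δ ^ s) = τ (cutoff L δ ^ s) := by
  refine le_antisymm (iSup_le fun n =>
    hτ.rpow_cutoff_mono (hT n) (h.le_of_monotone hmono n) δ hs) ?_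
  have hlim : StrictTendsto (fun n => cutoff (T n) δ ^ s) (cutoff L δ ^ s) := by
    simp only [cutoff_rpow (hT _) δ hs.1.le, cutoff_rpow (h.isSelfAdjoint hT) δ hs.1.le]
    exact h.cfc_of_continuous hT (.rpow_const (by fun_prop) fun _ => .inr hs.1.le)
  exact (hτ.le_liminf_of_strictTendsto hσ hnormal (fun n => CFC.rpow_nonneg) hlim).trans
    (liminf_le_of_frequently_le' (.of_forall fun n =>
      le_iSup (fun n => τ (cutoff (T n) δ ^ s)) n))

end TracialWeight

theorem stmt_16_general [PartialOrder 𝓜(ℂ, A)] [StarOrderedRing 𝓜(ℂ, A)] (hσ : SigmaUnital A)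
    {τ : 𝓜(ℂ, A) → ℝ≥0∞} (hτ : IsTracialWeight τ) (hnormal : IsStrictlyNormal τ)
    {T : ℕ → 𝓜(ℂ, A)} {L : 𝓜(ℂ, A)} (hT : ∀ n, IsSelfAdjoint (T n)) (hmono : Monotone T)
    (hstrict : StrictTendsto T L) (δ : ℝ) :
    Monotone (fun n => dimFn τ (cutoff (T n) δ)) ∧
      ⨆ n, dimFn τ (cutoff (T n) δ) = dimFn τ (cutoff L δ) := by
  have hexp (k : ℕ) : (1 : ℝ) / (k + 1) ∈ Set.Ioc (0 : ℝ) 1 :=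
    ⟨k.one_div_pos_of_nat, div_le_one_of_le₀ (by linarith [k.cast_nonneg (α := ℝ)]) (by positivity)⟩
  simp only [dimFn_eq_iSup_rpow τ (cutoff_nonneg _ δ)]
  refine ⟨fun m n hmn => iSup_mono fun k =>
    hτ.rpow_cutoff_mono (hT m) (hmono hmn) δ (hexp k), ?_⟩
  rw [iSup_comm]
  exact iSup_congr fun k => hτ.iSup_rpow_cutoff_eq hσ hnormal hT hmono hstrict δ (hexp k)

end MultiplierAlgebra

theorem stmt_16 {A : Type*} [NonUnitalCStarAlgebra A]
    [PartialOrder 𝓜(ℂ, A)] [StarOrderedRing 𝓜(ℂ, A)] (hσ : SigmaUnital A)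
    (τ : 𝓜(ℂ, A) → ℝ≥0∞) (hτ : IsTracialWeight τ)
    (hnormal : ∀ (x : 𝓜(ℂ, A)) (u : ℕ → 𝓜(ℂ, A)), 0 ≤ x → (∀ n, 0 ≤ u n) →
      Monotone u → StrictTendsto u x → τ x = ⨆ n, τ (u n))
    (T : ℕ → 𝓜(ℂ, A)) (L : 𝓜(ℂ, A)) (hpos : ∀ n, 0 ≤ T n) (hL : ‖L‖ ≤ 1)
    (hmono : ∀ n, T n ≤ T (n + 1)) (hstrict : StrictTendsto T L)
    (δ : ℝ) (hδ : 0 ≤ δ) :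
    Monotone (fun n => dimFn τ (cutoff (T n) δ)) ∧
      (⨆ n, dimFn τ (cutoff (T n) δ)) = dimFn τ (cutoff L δ) :=
  stmt_16_general hσ hτ hnormal (fun n => .of_nonneg (hpos n)) (monotone_nat_of_le_succ hmono)
    hstrict δ
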